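/- (Subordination-principle failure for weighted shifts) There exist a pair (L₀, L₁) of bounded invertible weighted shift operators with positive coefficients on a separable Hilbert space, and two shift-invariant Borel probability measures μ, ν on Σ₂ with the same support, such that μ is a maximising measure for (L₀, L₁) and ν is not. -/

import Mathlib

open MeasureTheory Filter

noncomputable section

/-- The full two-sided shift space on two symbols. -/
abbrev Sig := ℤ → Bool

/-- The two-sided shift map. -/
def shift : Sig → Sig := fun x i => x (i + 1)

variable {H : Type*} [NormedAddCommGroup H] [InnerProductSpace ℝ H] [CompleteSpace H]

/-- The set of pairs of bounded invertible weighted shift operators with positive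
coefficients relative to the orthonormal basis `e` (topologized as a subset of `B(H)²`).
Invertibility corresponds to the coefficient sequences being bounded away from zero. -/
def WSet (e : HilbertBasis ℤ ℝ H) : Set ((H →L[ℝ] H) × (H →L[ℝ] H)) :=
  {p | ∃ α β : ℤ → ℝ,
    (∃ c : ℝ, 0 < c ∧ ∀ i : ℤ, c ≤ α i) ∧ (∃ c : ℝ, 0 < c ∧ ∀ i : ℤ, c ≤ β i) ∧
    (∀ i : ℤ, p.1 (e i) = α i • e (i + 1)) ∧ (∀ i : ℤ, p.2 (e i) = β i • e (i + 1))}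

/-- The product `L_{x_{n-1}} ∘ ⋯ ∘ L_{x_0}` of members of the pair `p = (L₀, L₁)` chosen
according to the symbols of `x`. -/
def opProd (p : (H →L[ℝ] H) × (H →L[ℝ] H)) (x : Sig) (n : ℕ) : H →L[ℝ] H :=
  (List.ofFn fun i : Fin n => if x (i : ℤ) then p.2 else p.1).reverse.prod

/-- The top Lyapunov exponent of the pair `p` with respect to the shift-invariant
measure `μ`: `Λ(p,μ) = inf_{n ≥ 1} (1/n) ∫ log ‖L_{x_{n-1}} ⋯ L_{x_0}‖ dμ(x)`. -/
def LamOp (p : (H →L[ℝ] H) × (H →L[ℝ] H)) (μ : Measure Sig) : ℝ :=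
  ⨅ n : ℕ, ((n : ℝ) + 1)⁻¹ * ∫ x, Real.log ‖opProd p x (n + 1)‖ ∂μ

/-- The logarithm of the joint spectral radius of the pair `p`:
`log ϱ(p) = inf_{n ≥ 1} (1/n) sup_x log ‖L_{x_{n-1}} ⋯ L_{x_0}‖`. -/
def logSprOp (p : (H →L[ℝ] H) × (H →L[ℝ] H)) : ℝ :=
  ⨅ n : ℕ, ((n : ℝ) + 1)⁻¹ * ⨆ x : Sig, Real.log ‖opProd p x (n + 1)‖

/-- The (topological) support of a Borel measure on `Σ₂`. -/
def suppM (μ : Measure Sig) : Set Sig :=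
  {x : Sig | ∀ U : Set Sig, IsOpen U → x ∈ U → 0 < μ U}

/-!
Reading a one always costs `1`. The weights of the zeros vary along `ℤ`: along ever longer blocks
they copy periodic patterns in which `m` ones are repaid by `m ^ 2` zeros gaining `1 / m` each, and
every pattern occurs in arbitrarily long blocks. An orbit with period `m (m + 1)` that follows the
pattern loses nothing on average, so its exponent is nonnegative. Conversely a window of length `n`
collects at most `n / m + m`, because entering a block resets the account of the short patterns
to zero and leaving one only forfeits a debt; hence `log ϱ ≤ 0`, and every mixture of the periodic
orbits is maximising. The runs of `m` ones accumulate at the fixed point `1^∞`, which therefore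
lies in the support of a mixture of all these orbits. Mixing in the point mass at `1^∞`, of exponent
`-1`, leaves the support unchanged and destroys maximality.
-/

open scoped Topology

namespace Subordination

/-! ### Diagonal operators and pairs of weighted shifts -/

section Diagonal

variable {ι 𝕜 E F : Type*} [RCLike 𝕜] [NormedAddCommGroup E] [InnerProductSpace 𝕜 E]
  [NormedAddCommGroup F] [InnerProductSpace 𝕜 F] {c : ι → 𝕜} {C : ℝ} {v : ι → F}

lemma exists_clm_apply_basis [CompleteSpace F] (e : HilbertBasis ι 𝕜 E) (hv : Orthonormal 𝕜 v)
    (hC : 0 ≤ C) (hc : ∀ i, ‖c i‖ ≤ C) :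
    ∃ T : E →L[𝕜] F, (∀ i, T (e i) = c i • v i) ∧ ‖T‖ ≤ C := by
  classical
  let M : lp (fun _ : ι ↦ 𝕜) 2 →L[𝕜] lp (fun _ : ι ↦ 𝕜) 2 :=
    lp.mapCLM 2 (fun i ↦ c i • ContinuousLinearMap.id 𝕜 𝕜) hC fun i ↦ by
      simpa [norm_smul] using hc i
  have hM (i : ι) : M (lp.single 2 i 1) = lp.single 2 i (c i) := by
    ext k
    rcases eq_or_ne k i with rfl | hki
    · simp [M]
    · simp [M, hki]
  refine ⟨hv.orthogonalFamily.linearIsometry.toContinuousLinearMap ∘L M ∘L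
    e.repr.toContinuousLinearEquiv.toContinuousLinearMap, fun i ↦ ?_, ?_⟩
  · change hv.orthogonalFamily.linearIsometry (M (e.repr (e i))) = _
    rw [e.repr_self, hM, OrthogonalFamily.linearIsometry_apply_single,
      LinearIsometry.toSpanSingleton_apply]
  · refine ContinuousLinearMap.opNorm_le_bound _ hC fun x ↦ ?_
    simpa using M.le_of_opNorm_le (lp.norm_mapCLM_le 2 _ hC _) (e.repr x)

lemma norm_le_of_apply_basis [CompleteSpace F] (e : HilbertBasis ι 𝕜 E) (hv : Orthonormal 𝕜 v)
    {T : E →L[𝕜] F} (hT : ∀ i, T (e i) = c i • v i) (hC : 0 ≤ C) (hc : ∀ i, ‖c i‖ ≤ C) :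
    ‖T‖ ≤ C := by
  obtain ⟨S, hS, hSC⟩ := exists_clm_apply_basis e hv hC hc
  suffices T = S from this ▸ hSC
  refine ContinuousLinearMap.ext_on
    (Submodule.dense_iff_topologicalClosure_eq_top.mpr e.dense_span) ?_
  rintro _ ⟨i, rfl⟩
  rw [hT, hS]

lemma norm_coeff_le_of_apply_basis (e : HilbertBasis ι 𝕜 E) (hv : Orthonormal 𝕜 v) {T : E →L[𝕜] F}
    (hT : ∀ i, T (e i) = c i • v i) (i : ι) : ‖c i‖ ≤ ‖T‖ := by
  simpa [hT, norm_smul, hv.1 i] using T.unit_le_opNorm (e i) (e.orthonormal.1 i).le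

end Diagonal

section WeightedShift

variable {E : Type*} [NormedAddCommGroup E] [InnerProductSpace ℝ E] {e : HilbertBasis ℤ ℝ E}
  {φ : Bool → ℤ → ℝ} {p : (E →L[ℝ] E) × (E →L[ℝ] E)} {x : Sig} {n : ℕ} {C : ℝ}

/-- The pair `p = (L₀, L₁)` is the pair of weighted shifts `L_a e_i = exp (φ a i) e_{i+1}` with
potential `φ`; the symbol `true` stands for `1`, as in `opProd`. -/
def IsShiftPair (e : HilbertBasis ℤ ℝ E) (φ : Bool → ℤ → ℝ) (p : (E →L[ℝ] E) × (E →L[ℝ] E)) :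
    Prop :=
  ∀ a i, (if a then p.2 else p.1) (e i) = Real.exp (φ a i) • e (i + 1)

/-- The potential collected by a basis vector that starts at `k` and is moved by the first `n`
operators prescribed by `x`. -/
def windowSum (φ : Bool → ℤ → ℝ) (x : Sig) (n : ℕ) (k : ℤ) : ℝ :=
  ∑ i ∈ Finset.range n, φ (x i) (k + i)

lemma exists_isShiftPair [CompleteSpace E] (e : HilbertBasis ℤ ℝ E) (hφ : ∀ a i, |φ a i| ≤ C) :
    ∃ p ∈ WSet e, IsShiftPair e φ p := by
  have hv : Orthonormal ℝ fun i : ℤ ↦ e (i + 1) := e.orthonormal.comp _ (add_left_injective 1)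
  have hle (a : Bool) (i : ℤ) : ‖Real.exp (φ a i)‖ ≤ Real.exp C := by
    simpa using (abs_le.mp (hφ a i)).2
  have hge (a : Bool) : ∃ δ > 0, ∀ i, δ ≤ Real.exp (φ a i) :=
    ⟨Real.exp (-C), Real.exp_pos _, fun i ↦ Real.exp_le_exp.mpr (abs_le.mp (hφ a i)).1⟩
  obtain ⟨L₀, hL₀, -⟩ := exists_clm_apply_basis e hv (Real.exp_pos C).le (hle false)
  obtain ⟨L₁, hL₁, -⟩ := exists_clm_apply_basis e hv (Real.exp_pos C).le (hle true)
  refine ⟨(L₀, L₁), ⟨_, _, hge false, hge true, hL₀, hL₁⟩, ?_⟩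
  rintro (_ | _) i
  exacts [hL₀ i, hL₁ i]

lemma opProd_succ (p : (E →L[ℝ] E) × (E →L[ℝ] E)) (x : Sig) (n : ℕ) :
    opProd p x (n + 1) = (if x n then p.2 else p.1) * opProd p x n := by
  rw [opProd, List.ofFn_succ', List.concat_eq_append, List.reverse_concat, List.prod_cons]
  rfl

lemma IsShiftPair.opProd_apply (hp : IsShiftPair e φ p) (x : Sig) (n : ℕ) (k : ℤ) :
    opProd p x n (e k) = Real.exp (windowSum φ x n k) • e (k + n) := by
  induction n with
  | zero => simp [opProd, windowSum]
  | succ n ih =>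
    rw [opProd_succ, mul_apply_eq_comp, ih, map_smul, hp, smul_smul, ← Real.exp_add,
      windowSum, windowSum, Finset.sum_range_succ, Nat.cast_succ, add_assoc]

lemma IsShiftPair.exp_windowSum_le (hp : IsShiftPair e φ p) (x : Sig) (n : ℕ) (k : ℤ) :
    Real.exp (windowSum φ x n k) ≤ ‖opProd p x n‖ := by
  simpa using norm_coeff_le_of_apply_basis e (e.orthonormal.comp _ (add_left_injective (n : ℤ)))
    (hp.opProd_apply x n) k

lemma IsShiftPair.windowSum_le_log_norm_opProd (hp : IsShiftPair e φ p) (x : Sig) (n : ℕ)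
    (k : ℤ) : windowSum φ x n k ≤ Real.log ‖opProd p x n‖ := by
  have h := hp.exp_windowSum_le x n k
  rwa [Real.le_log_iff_exp_le ((Real.exp_pos _).trans_le h)]

lemma IsShiftPair.log_norm_opProd_le [CompleteSpace E] (hp : IsShiftPair e φ p)
    (h : ∀ k, windowSum φ x n k ≤ C) : Real.log ‖opProd p x n‖ ≤ C := by
  rw [Real.log_le_iff_le_exp ((Real.exp_pos _).trans_le (hp.exp_windowSum_le x n 0))]
  exact norm_le_of_apply_basis e (e.orthonormal.comp _ (add_left_injective (n : ℤ)))
    (hp.opProd_apply x n) (Real.exp_pos C).le fun k ↦ by simpa using h k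

lemma abs_windowSum_le (hφ : ∀ a i, |φ a i| ≤ C) (x : Sig) (n : ℕ) (k : ℤ) :
    |windowSum φ x n k| ≤ n * C := by
  refine (Finset.abs_sum_le_sum_abs _ _).trans ?_
  simpa using Finset.sum_le_card_nsmul (Finset.range n) _ C fun i _ ↦ hφ (x i) (k + i)

lemma IsShiftPair.abs_log_norm_opProd_le [CompleteSpace E] (hp : IsShiftPair e φ p)
    (hφ : ∀ a i, |φ a i| ≤ C) (x : Sig) (n : ℕ) : |Real.log ‖opProd p x n‖| ≤ n * C :=
  abs_le.mpr ⟨(abs_le.mp (abs_windowSum_le hφ x n 0)).1.trans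
    (hp.windowSum_le_log_norm_opProd x n 0),
    hp.log_norm_opProd_le fun k ↦ (abs_le.mp (abs_windowSum_le hφ x n k)).2⟩

end WeightedShift

/-! ### Lyapunov exponents and the joint spectral radius -/

section Exponents

variable {E : Type*} [NormedAddCommGroup E] [InnerProductSpace ℝ E]
  {p : (E →L[ℝ] E) × (E →L[ℝ] E)} {μ : Measure Sig} {C : ℝ}

lemma continuous_opProd (p : (E →L[ℝ] E) × (E →L[ℝ] E)) (n : ℕ) :
    Continuous fun x ↦ opProd p x n := by
  induction n with
  | zero => simpa only [opProd, List.ofFn_zero] using continuous_const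
  | succ n ih =>
    simp only [opProd_succ]
    exact ((continuous_of_discreteTopology (f := fun b : Bool ↦ if b then p.2 else p.1)).comp
      (continuous_apply (n : ℤ))).mul ih

lemma integrable_log_norm_opProd [IsFiniteMeasure μ]
    (hC : ∀ x n, |Real.log ‖opProd p x n‖| ≤ n * C) (n : ℕ) :
    Integrable (fun x ↦ Real.log ‖opProd p x n‖) μ :=
  .of_bound (Real.measurable_log.comp (continuous_opProd p n).norm.measurable).aestronglyMeasurable
    (n * C) (.of_forall fun x ↦ hC x n)

lemma bddAbove_log_norm_opProd (hC : ∀ x n, |Real.log ‖opProd p x n‖| ≤ n * C) (n : ℕ) :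
    BddAbove (Set.range fun x ↦ Real.log ‖opProd p x n‖) :=
  ⟨n * C, by rintro _ ⟨x, rfl⟩; exact (abs_le.mp (hC x n)).2⟩

lemma integral_log_norm_opProd_le_iSup [IsProbabilityMeasure μ]
    (hC : ∀ x n, |Real.log ‖opProd p x n‖| ≤ n * C) (n : ℕ) :
    ∫ x, Real.log ‖opProd p x n‖ ∂μ ≤ ⨆ x, Real.log ‖opProd p x n‖ := by
  simpa using integral_mono (integrable_log_norm_opProd hC n) (integrable_const (μ := μ) _)
    fun x ↦ le_ciSup (bddAbove_log_norm_opProd hC n) x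

lemma neg_le_integral_log_norm_opProd [IsProbabilityMeasure μ]
    (hC : ∀ x n, |Real.log ‖opProd p x n‖| ≤ n * C) (n : ℕ) :
    -(n * C) ≤ ∫ x, Real.log ‖opProd p x n‖ ∂μ := by
  simpa using integral_mono (integrable_const (μ := μ) _) (integrable_log_norm_opProd hC n)
    fun x ↦ (abs_le.mp (hC x n)).1

lemma bddBelow_inv_mul {u : ℕ → ℝ} (hu : ∀ n : ℕ, -(n * C) ≤ u n) :
    BddBelow (Set.range fun n : ℕ ↦ ((n : ℝ) + 1)⁻¹ * u (n + 1)) := by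
  refine ⟨-C, ?_⟩
  rintro _ ⟨n, rfl⟩
  have h := hu (n + 1)
  dsimp only
  rw [← div_eq_inv_mul, le_div_iff₀ (by positivity)]
  push_cast at h
  linarith

lemma LamOp_le_integral_one [IsProbabilityMeasure μ]
    (hC : ∀ x n, |Real.log ‖opProd p x n‖| ≤ n * C) :
    LamOp p μ ≤ ∫ x, Real.log ‖opProd p x 1‖ ∂μ := by
  simpa [LamOp] using ciInf_le (bddBelow_inv_mul (neg_le_integral_log_norm_opProd (μ := μ) hC)) 0

lemma LamOp_le_logSprOp [IsProbabilityMeasure μ]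
    (hC : ∀ x n, |Real.log ‖opProd p x n‖| ≤ n * C) : LamOp p μ ≤ logSprOp p :=
  ciInf_mono (bddBelow_inv_mul (neg_le_integral_log_norm_opProd hC)) fun n ↦
    mul_le_mul_of_nonneg_left (integral_log_norm_opProd_le_iSup hC (n + 1)) (by positivity)

lemma LamOp_nonneg (h : ∀ n, 0 ≤ ∫ x, Real.log ‖opProd p x n‖ ∂μ) : 0 ≤ LamOp p μ :=
  le_ciInf fun n ↦ mul_nonneg (by positivity) (h (n + 1))

lemma logSprOp_le_of_window_bound {ε B : ℝ} (hC : ∀ x n, |Real.log ‖opProd p x n‖| ≤ n * C)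
    (h : ∀ x n, Real.log ‖opProd p x n‖ ≤ n * ε + B) : logSprOp p ≤ ε := by
  have hbdd : BddBelow (Set.range fun n : ℕ ↦
      ((n : ℝ) + 1)⁻¹ * ⨆ x, Real.log ‖opProd p x (n + 1)‖) :=
    bddBelow_inv_mul fun n ↦ (abs_le.mp (hC (fun _ ↦ true) n)).1.trans
      (le_ciSup (bddAbove_log_norm_opProd hC n) _)
  have hn (n : ℕ) : logSprOp p ≤ ε + B * (1 / ((n : ℝ) + 1)) := by
    refine (ciInf_le hbdd n).trans ?_
    rw [← div_eq_inv_mul, div_le_iff₀ (by positivity)]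
    refine (ciSup_le fun x ↦ h x (n + 1)).trans_eq ?_
    push_cast
    field_simp
  simpa using ge_of_tendsto'
    (tendsto_const_nhds.add (tendsto_one_div_add_atTop_nhds_zero_nat.const_mul B)) hn

end Exponents

/-! ### Invariant measures -/

section OrbitMeasure

variable {α : Type*} [MeasurableSpace α] {T : α → α} {x : α} {N : ℕ}

/-- The empirical measure of the first `N` points of the orbit of `x` under `T`. -/
def orbitMeasure (T : α → α) (x : α) (N : ℕ) : Measure α :=
  (N : ENNReal)⁻¹ • ∑ t ∈ Finset.range N, Measure.dirac (T^[t] x)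

lemma isProbabilityMeasure_orbitMeasure (hN : N ≠ 0) :
    IsProbabilityMeasure (orbitMeasure T x N) :=
  ⟨by simp [orbitMeasure, ENNReal.inv_mul_cancel, hN]⟩

lemma map_orbitMeasure (hT : Measurable T) (hx : T.IsPeriodicPt N x) :
    (orbitMeasure T x N).map T = orbitMeasure T x N := by
  rw [orbitMeasure, Measure.map_smul, Measure.map_finset_sum hT.aemeasurable]
  simp only [Measure.map_dirac' hT, ← Function.iterate_succ_apply']
  cases N with
  | zero => simp
  | succ M =>
    rw [Finset.sum_range_succ, Finset.sum_range_succ' _ M, hx.eq, Function.iterate_zero_apply]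

lemma integral_orbitMeasure [MeasurableSingletonClass α] (f : α → ℝ) :
    ∫ y, f y ∂(orbitMeasure T x N) = birkhoffAverage ℝ T f N x := by
  rw [orbitMeasure, integral_smul_measure, integral_finsetSum_measure fun t _ ↦
    integrable_dirac (by simp)]
  simp [birkhoffAverage, birkhoffSum]

lemma integrable_orbitMeasure [MeasurableSingletonClass α] (hN : N ≠ 0) (f : α → ℝ) :
    Integrable f (orbitMeasure T x N) :=
  (integrable_finsetSum_measure.mpr fun t _ ↦ integrable_dirac (by simp)).smul_measure
    (by simpa using hN)

lemma integral_orbitMeasure_mono [MeasurableSingletonClass α] {f g : α → ℝ}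
    (h : ∀ t, f (T^[t] x) ≤ g (T^[t] x)) :
    ∫ y, f y ∂(orbitMeasure T x N) ≤ ∫ y, g y ∂(orbitMeasure T x N) := by
  rw [integral_orbitMeasure, integral_orbitMeasure]
  exact smul_le_smul_of_nonneg_left (Finset.sum_le_sum fun t _ ↦ h t) (by positivity)

lemma dirac_iterate_absolutelyContinuous_orbitMeasure {t : ℕ} (ht : t < N) :
    Measure.dirac (T^[t] x) ≪ orbitMeasure T x N :=
  (Measure.absolutelyContinuous_of_le (Finset.single_le_sum (f := fun t ↦ Measure.dirac (T^[t] x))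
    (fun _ _ ↦ Measure.zero_le _) (Finset.mem_range.mpr ht))).trans
      (Measure.absolutelyContinuous_smul (by simp))

end OrbitMeasure

section BirkhoffSum

variable {α : Type*} [MeasurableSpace α] {T : α → α} {μ : Measure α} {f : α → ℝ}

lemma integral_birkhoffSum (hT : MeasurePreserving T μ μ) (hf : Integrable f μ) (n : ℕ) :
    ∫ x, birkhoffSum T f n x ∂μ = n * ∫ x, f x ∂μ := by
  have hint (t : ℕ) : Integrable (f ∘ T^[t]) μ := (hT.iterate t).integrable_comp_of_integrable hf
  have hconst (t : ℕ) : ∫ x, f (T^[t] x) ∂μ = ∫ x, f x ∂μ := by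
    have hft : AEStronglyMeasurable f (μ.map T^[t]) := by
      rw [(hT.iterate t).map_eq]; exact hf.aestronglyMeasurable
    rw [← integral_map (hT.iterate t).aemeasurable hft, (hT.iterate t).map_eq]
  calc ∫ x, birkhoffSum T f n x ∂μ = ∑ t ∈ Finset.range n, ∫ x, f (T^[t] x) ∂μ :=
        integral_finsetSum _ fun t _ ↦ hint t
    _ = n * ∫ x, f x ∂μ := by simp [hconst]

end BirkhoffSum

section Mixtures

variable {α : Type*} [MeasurableSpace α] {T : α → α} {μ ν : Measure α} {m : ℕ → Measure α}

/-- The convex combination `∑ⱼ 2^{-(j+1)} mⱼ` of a sequence of measures. -/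
def dyadicMixture (m : ℕ → Measure α) : Measure α :=
  Measure.sum fun j ↦ (2⁻¹ : ENNReal) ^ (j + 1) • m j

/-- The midpoint `(μ + ν) / 2` of two measures. -/
def halfSum (μ ν : Measure α) : Measure α :=
  (2⁻¹ : ENNReal) • (μ + ν)

lemma isProbabilityMeasure_dyadicMixture (hm : ∀ j, IsProbabilityMeasure (m j)) :
    IsProbabilityMeasure (dyadicMixture m) := by
  refine ⟨?_⟩
  rw [dyadicMixture, Measure.sum_apply _ .univ]
  simp only [Measure.smul_apply, measure_univ, smul_eq_mul, mul_one]
  rw [ENNReal.tsum_geometric_add_one, ENNReal.one_sub_inv_two, inv_inv,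
    ENNReal.inv_mul_cancel two_ne_zero ENNReal.ofNat_ne_top]

lemma map_dyadicMixture (hT : Measurable T) (hm : ∀ j, (m j).map T = m j) :
    (dyadicMixture m).map T = dyadicMixture m := by
  simp only [dyadicMixture, Measure.map_sum hT.aemeasurable, Measure.map_smul, hm]

lemma absolutelyContinuous_dyadicMixture (j : ℕ) : m j ≪ dyadicMixture m :=
  (Measure.absolutelyContinuous_smul (by simp)).trans
    (Measure.absolutelyContinuous_of_le
      (Measure.le_sum (fun j ↦ (2⁻¹ : ENNReal) ^ (j + 1) • m j) j))

lemma integral_dyadicMixture_nonneg {f : α → ℝ} (hf : Integrable f (dyadicMixture m))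
    (h : ∀ j, 0 ≤ ∫ x, f x ∂(m j)) : 0 ≤ ∫ x, f x ∂(dyadicMixture m) := by
  rw [dyadicMixture, integral_sum_measure hf]
  refine tsum_nonneg fun j ↦ ?_
  rw [integral_smul_measure]
  exact smul_nonneg ENNReal.toReal_nonneg (h j)

lemma isProbabilityMeasure_halfSum [IsProbabilityMeasure μ] [IsProbabilityMeasure ν] :
    IsProbabilityMeasure (halfSum μ ν) :=
  ⟨by simp [halfSum, ENNReal.inv_two_add_inv_two]⟩

lemma map_halfSum (hT : Measurable T) (hμ : μ.map T = μ) (hν : ν.map T = ν) :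
    (halfSum μ ν).map T = halfSum μ ν := by
  rw [halfSum, Measure.map_smul, Measure.map_add _ _ hT, hμ, hν]

lemma integral_halfSum {f : α → ℝ} (hμ : Integrable f μ) (hν : Integrable f ν) :
    ∫ x, f x ∂(halfSum μ ν) = (∫ x, f x ∂μ + ∫ x, f x ∂ν) / 2 := by
  rw [halfSum, integral_smul_measure, integral_add_measure hμ hν]
  simp [div_eq_inv_mul]

end Mixtures

section Support

variable {α : Type*} [MeasurableSpace α] [TopologicalSpace α] {μ : Measure α}

lemma suppM_eq_support (μ : Measure Sig) : suppM μ = μ.support := by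
  rw [Measure.support_eq_forall_isOpen]
  exact Set.ext fun x ↦ forall_congr' fun U ↦ forall_comm

lemma support_halfSum (μ ν : Measure α) :
    (halfSum μ ν).support = μ.support ∪ ν.support := by
  rw [← Measure.support_add]
  exact (Measure.smul_absolutelyContinuous.support_mono).antisymm
    (Measure.absolutelyContinuous_smul (by simp)).support_mono

lemma mem_support_dirac (x : α) : x ∈ (Measure.dirac x).support :=
  (Measure.mem_support_iff_forall x).mpr fun U hU ↦ by
    simp [Measure.dirac_apply_of_mem (mem_of_mem_nhds hU)]

lemma support_halfSum_dirac [OpensMeasurableSpace α] {x : α} (hx : x ∈ μ.support) :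
    (halfSum μ (Measure.dirac x)).support = μ.support := by
  rw [support_halfSum, Set.union_eq_left]
  exact Measure.support_subset_of_isClosed Measure.isClosed_support
    ((mem_ae_dirac_iff Measure.isClosed_support.measurableSet).mpr hx)

end Support

/-! ### Periodic words with vanishing total reward -/

section Words

variable {m : ℕ}

/-- The fixed point `1^∞` of the shift. -/
def ones : Sig := fun _ ↦ true

/-- The periodic point of period `m (m + 1)` carrying `m` ones followed by `m ^ 2` zeros. -/
def word (m : ℕ) : Sig := fun i ↦ decide (i % (m * (m + 1)) < m)

/-- The reward of reading the symbol `x 0`: a one costs `1` and a zero gains `1 / m`, so that the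
total over a period of `word m` vanishes. -/
def reward (m : ℕ) (x : Sig) : ℝ := if x 0 then -1 else (m : ℝ)⁻¹

/-- The total reward collected on the first `r` symbols of `word m`: the first argument of the
maximum describes the descent along the ones, the second the recovery along the zeros. -/
def height (m r : ℕ) : ℝ :=
  max (-((r % (m * (m + 1)) : ℕ) : ℝ)) ((((r % (m * (m + 1)) : ℕ) : ℝ) - m * (m + 1)) / m)

lemma shift_iterate_apply (t : ℕ) (x : Sig) (i : ℤ) : shift^[t] x i = x (i + t) := by
  induction t generalizing x with
  | zero => simp
  | succ t ih =>
    rw [Function.iterate_succ_apply, ih, shift]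
    congr 1
    push_cast
    ring

lemma measurable_shift : Measurable shift :=
  measurable_pi_lambda _ fun i ↦ measurable_pi_apply (i + 1)

lemma map_shift_dirac_ones : (Measure.dirac ones).map shift = Measure.dirac ones :=
  Measure.map_dirac' measurable_shift ones

lemma isPeriodicPt_word (m : ℕ) : shift.IsPeriodicPt (m * (m + 1)) (word m) := by
  funext i
  simp [shift_iterate_apply, word]

lemma tendsto_shift_iterate_word :
    Tendsto (fun m ↦ shift^[m / 2] (word m)) atTop (𝓝 ones) := by
  refine tendsto_pi_nhds.mpr fun i ↦ tendsto_nhds_of_eventually_eq ?_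
  filter_upwards [eventually_ge_atTop (2 * i.natAbs + 2)] with m hm
  have hmP : m ≤ m * (m + 1) := Nat.le_mul_of_pos_right m m.succ_pos
  rw [shift_iterate_apply, word, ones, decide_eq_true_eq, Int.emod_eq_of_lt (by omega)]
  · omega
  · zify at hmP
    omega

lemma reward_shift_iterate_word (m r : ℕ) :
    reward m (shift^[r] (word m)) = if r % (m * (m + 1)) < m then -1 else (m : ℝ)⁻¹ := by
  simp only [reward, shift_iterate_apply, word, zero_add, decide_eq_true_eq]
  norm_cast

lemma neg_one_le_reward (m : ℕ) (x : Sig) : -1 ≤ reward m x := by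
  rw [reward]
  split_ifs
  · rfl
  · linarith [show (0 : ℝ) ≤ (m : ℝ)⁻¹ by positivity]

lemma reward_le (m : ℕ) (x : Sig) : reward m x ≤ (m : ℝ)⁻¹ := by
  rw [reward]
  split_ifs
  · linarith [show (0 : ℝ) ≤ (m : ℝ)⁻¹ by positivity]
  · rfl

lemma height_of_dvd {r : ℕ} (hr : m * (m + 1) ∣ r) : height m r = 0 := by
  rw [height, Nat.mod_eq_zero_of_dvd hr]
  refine (max_eq_left ?_).trans (by simp)
  have hperiod : (0 : ℝ) ≤ m * (m + 1) := by positivity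
  exact (div_nonpos_of_nonpos_of_nonneg (by simpa using hperiod) m.cast_nonneg).trans (by simp)

lemma height_of_mod_le {r : ℕ} (hm : 0 < m) (hr : r % (m * (m + 1)) ≤ m) :
    height m r = -((r % (m * (m + 1)) : ℕ) : ℝ) := by
  refine max_eq_left ?_
  rw [div_le_iff₀ (by exact_mod_cast hm)]
  have : ((r % (m * (m + 1)) : ℕ) : ℝ) ≤ m := by exact_mod_cast hr
  nlinarith

lemma height_of_le_mod {r : ℕ} (hm : 0 < m) (hr : m ≤ r % (m * (m + 1))) :
    height m r = (((r % (m * (m + 1)) : ℕ) : ℝ) - m * (m + 1)) / m := by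
  refine max_eq_right ?_
  rw [le_div_iff₀ (by exact_mod_cast hm)]
  have : (m : ℝ) ≤ (r % (m * (m + 1)) : ℕ) := by exact_mod_cast hr
  nlinarith

lemma height_nonpos (hm : 0 < m) (r : ℕ) : height m r ≤ 0 := by
  have hr : ((r % (m * (m + 1)) : ℕ) : ℝ) ≤ m * (m + 1) := by
    exact_mod_cast (Nat.mod_lt r (by positivity)).le
  exact max_le (by simp) (div_nonpos_of_nonpos_of_nonneg (by linarith) m.cast_nonneg)

lemma neg_le_height (hm : 0 < m) (r : ℕ) : -(m : ℝ) ≤ height m r := by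
  rcases le_total (r % (m * (m + 1))) m with hr | hr
  · rw [height_of_mod_le hm hr]
    exact neg_le_neg (by exact_mod_cast hr)
  · rw [height_of_le_mod hm hr, le_div_iff₀ (by exact_mod_cast hm)]
    have : (m : ℝ) ≤ (r % (m * (m + 1)) : ℕ) := by exact_mod_cast hr
    linarith

lemma height_succ_sub (hm : 0 < m) (r : ℕ) :
    height m (r + 1) - height m r = reward m (shift^[r] (word m)) := by
  have hm' : (m : ℝ) ≠ 0 := by positivity
  have hlt : r % (m * (m + 1)) < m * (m + 1) := Nat.mod_lt r (by positivity)
  have hPm : m + 1 ≤ m * (m + 1) := Nat.le_mul_of_pos_left _ hm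
  rw [reward_shift_iterate_word]
  rcases (Nat.add_one_le_of_lt hlt).eq_or_lt with hend | hmid
  · have hdvd : m * (m + 1) ∣ r + 1 := by
      rw [← Nat.div_add_mod r (m * (m + 1)), add_assoc, hend]
      exact (Nat.dvd_mul_right _ _).add dvd_rfl
    have hcast : ((r % (m * (m + 1)) : ℕ) : ℝ) + 1 = m * (m + 1) := by exact_mod_cast hend
    rw [height_of_dvd hdvd, height_of_le_mod hm (by omega), if_neg (by omega), ← hcast]
    field_simp
    ring
  · have hmod : (r + 1) % (m * (m + 1)) = r % (m * (m + 1)) + 1 := by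
      rw [Nat.add_mod, Nat.one_mod_eq_one.mpr (by omega), Nat.mod_eq_of_lt hmid]
    rcases lt_or_ge (r % (m * (m + 1))) m with hr | hr
    · rw [height_of_mod_le hm (by omega), height_of_mod_le hm hr.le, hmod, if_pos hr]
      push_cast
      ring
    · rw [height_of_le_mod hm (by omega), height_of_le_mod hm hr, hmod, if_neg hr.not_gt]
      push_cast
      field_simp
      ring

lemma integral_reward_orbitMeasure_word (hm : 0 < m) :
    ∫ x, reward m x ∂(orbitMeasure shift (word m) (m * (m + 1))) = 0 := by
  rw [integral_orbitMeasure, birkhoffAverage, birkhoffSum]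
  simp only [← height_succ_sub hm]
  rw [Finset.sum_range_sub, height_of_dvd dvd_rfl, height_of_dvd (dvd_zero _), sub_self,
    smul_zero]

end Words

/-! ### Concatenating longer and longer copies of sequences -/

section Concatenation

variable {h : ℕ → ℕ → ℝ}

/-- The index of the sequence copied around position `i`: the block `[2 ^ N, 2 ^ (N + 1))` is
assigned to the first component of `N` under the pairing of `ℕ` with `ℕ × ℕ`, so that each index
owns arbitrarily long blocks. Nonpositive positions belong to index `0`. -/
def level (i : ℤ) : ℕ := (Nat.unpair (Nat.log 2 i.toNat)).1

/-- The position of `i` relative to the beginning of its dyadic block, and `0` for `i ≤ 0`. -/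
def offset (i : ℤ) : ℕ := i.toNat - 2 ^ Nat.log 2 i.toNat

/-- The bi-infinite sequence that copies in each dyadic block an initial segment of the sequence
`f j` to which that block is assigned. -/
def concat (f : ℕ → ℕ → ℝ) (i : ℤ) : ℝ := f (level i) (offset i)

lemma exists_concat_eq (f : ℕ → ℕ → ℝ) (j n : ℕ) :
    ∃ k : ℤ, ∀ r < n, concat f (k + r) = f j r := by
  refine ⟨2 ^ Nat.pair j n, fun r hr ↦ ?_⟩
  have hn : n < 2 ^ Nat.pair j n := (Nat.right_le_pair j n).trans_lt Nat.lt_two_pow_self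
  have hi : ((2 : ℤ) ^ Nat.pair j n + r).toNat = 2 ^ Nat.pair j n + r := by
    rw [← Int.toNat_natCast (2 ^ Nat.pair j n + r)]
    push_cast
    rfl
  have hlog : Nat.log 2 (2 ^ Nat.pair j n + r) = Nat.pair j n :=
    Nat.log_eq_of_pow_le_of_lt_pow (by omega) (by rw [pow_succ]; omega)
  simp [concat, level, offset, hi, hlog]

lemma level_offset_succ (i : ℤ) :
    (level (i + 1) = level i ∧ offset (i + 1) = offset i + 1) ∨ offset (i + 1) = 0 := by
  rcases lt_or_ge 0 i with hi | hi
  · obtain ⟨n, rfl⟩ := Int.eq_ofNat_of_zero_le hi.le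
    have hn : n ≠ 0 := by omega
    have hpow : 2 ^ Nat.log 2 n ≤ n := Nat.pow_log_le_self 2 hn
    have hsucc : ((n : ℤ) + 1).toNat = n + 1 := rfl
    simp only [level, offset, hsucc, Int.toNat_natCast]
    rcases (Nat.log_mono_right n.le_succ : Nat.log 2 n ≤ Nat.log 2 (n + 1)).eq_or_lt
      with hlog | hlog
    · exact .inl ⟨by rw [← hlog], by rw [← hlog]; omega⟩
    · have := Nat.lt_pow_of_log_lt one_lt_two hlog
      exact .inr (by omega)
  · right
    rcases hi.eq_or_lt with rfl | hi
    · simp [offset]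
    · simp [offset, show (i + 1).toNat = 0 by omega]

lemma sum_concat_le {ε B : ℝ} {J : ℕ} (hε : 0 ≤ ε) (hB : 0 ≤ B) (h_zero : ∀ j, h j 0 = 0)
    (h_nonpos : ∀ j r, h j r ≤ 0) (h_ge : ∀ j < J, ∀ r, -B ≤ h j r)
    (h_inc : ∀ j ≥ J, ∀ r, h j (r + 1) - h j r ≤ ε) (k : ℤ) (n : ℕ) :
    ∑ i ∈ Finset.range n, concat (fun j r ↦ h j (r + 1) - h j r) (k + i) ≤ n * ε + B := by
  let corrector (i : ℤ) : ℝ := if level i < J then h (level i) (offset i) else 0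
  have hcor_nonpos (i : ℤ) : corrector i ≤ 0 := by
    dsimp only [corrector]; split_ifs
    exacts [h_nonpos _ _, le_rfl]
  have hcor_ge (i : ℤ) : -B ≤ corrector i := by
    dsimp only [corrector]; split_ifs with hi
    exacts [h_ge _ hi _, by linarith]
  have hstep (i : ℤ) : concat (fun j r ↦ h j (r + 1) - h j r) i ≤
      ε + (corrector (i + 1) - corrector i) := by
    dsimp only [concat, corrector]
    have hnext := h_nonpos (level i) (offset i + 1)
    rcases level_offset_succ i with ⟨hlevel, hoffset⟩ | hoffset
    · rw [hlevel, hoffset]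
      split_ifs with hi
      · linarith
      · linarith [h_inc _ (not_lt.mp hi) (offset i)]
    · rw [hoffset, h_zero, ite_self]
      split_ifs with hi
      · linarith
      · linarith [h_inc _ (not_lt.mp hi) (offset i)]
  calc ∑ i ∈ Finset.range n, concat (fun j r ↦ h j (r + 1) - h j r) (k + i)
      ≤ ∑ i ∈ Finset.range n,
          (ε + (corrector (k + (i + 1 : ℕ)) - corrector (k + i))) :=
        Finset.sum_le_sum fun i _ ↦ by simpa [add_assoc] using hstep (k + i)
    _ = n * ε + (corrector (k + n) - corrector k) := by
        rw [Finset.sum_add_distrib, Finset.sum_range_sub fun i : ℕ ↦ corrector (k + i)]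
        simp
    _ ≤ n * ε + B := by linarith [hcor_nonpos (k + n), hcor_ge k]

end Concatenation

/-! ### The potential and the two measures -/

section Construction

variable {E : Type*} [NormedAddCommGroup E] [InnerProductSpace ℝ E] {e : HilbertBasis ℤ ℝ E}
  {p : (E →L[ℝ] E) × (E →L[ℝ] E)}

/-- The potential of the counterexample. Copying `word (j + 2)` rather than `word j` keeps the
gains of the zeros below `1 / 2`, half the cost of a one. -/
def potential : Bool → ℤ → ℝ
  | true, _ => -1
  | false, i => concat (fun j r ↦ reward (j + 2) (shift^[r] (word (j + 2)))) i

/-- The mixture of the periodic orbits of the words `word (j + 2)`. -/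
def orbitMixture : Measure Sig :=
  dyadicMixture fun j ↦ orbitMeasure shift (word (j + 2)) ((j + 2) * (j + 2 + 1))

lemma neg_one_le_potential (a : Bool) (i : ℤ) : -1 ≤ potential a i := by
  cases a
  exacts [neg_one_le_reward _ _, le_rfl]

lemma potential_le_potential_false (a : Bool) (i : ℤ) : potential a i ≤ potential false i := by
  cases a
  exacts [le_rfl, neg_one_le_potential false i]

lemma potential_le_half (a : Bool) (i : ℤ) : potential a i ≤ 1 / 2 := by
  refine (potential_le_potential_false a i).trans ((reward_le _ _).trans ?_)
  rw [one_div]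
  exact inv_anti₀ two_pos (by simp)

lemma abs_potential_le (a : Bool) (i : ℤ) : |potential a i| ≤ 1 :=
  abs_le.mpr ⟨neg_one_le_potential a i, (potential_le_half a i).trans (by norm_num)⟩

lemma windowSum_potential_le (J : ℕ) (x : Sig) (n : ℕ) (k : ℤ) :
    windowSum potential x n k ≤ n * ((J + 2 : ℕ) : ℝ)⁻¹ + (J + 2 : ℕ) := by
  rw [windowSum]
  refine (Finset.sum_le_sum fun (i : ℕ) _ ↦ potential_le_potential_false (x i) (k + i)).trans ?_
  simp only [potential, ← height_succ_sub (Nat.succ_pos _)]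
  refine sum_concat_le (J := J) (h := fun j ↦ height (j + 2)) (by positivity) (by positivity)
    (fun j ↦ height_of_dvd (dvd_zero _)) (fun j ↦ height_nonpos (Nat.succ_pos _))
    (fun j hj r ↦ ?_) (fun j hj r ↦ ?_) k n
  · refine le_trans (neg_le_neg ?_) (neg_le_height (Nat.succ_pos _) r)
    exact_mod_cast (by omega)
  · rw [height_succ_sub (Nat.succ_pos _)]
    exact (reward_le _ _).trans (inv_anti₀ (by positivity) (by exact_mod_cast (by omega)))

lemma exists_windowSum_potential_eq (j t n : ℕ) :
    ∃ k, windowSum potential (shift^[t] (word (j + 2))) n k =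
      birkhoffSum shift (reward (j + 2)) n (shift^[t] (word (j + 2))) := by
  obtain ⟨k, hk⟩ := exists_concat_eq
    (fun j r ↦ reward (j + 2) (shift^[r] (word (j + 2)))) j (n + t)
  refine ⟨k + t, Finset.sum_congr rfl fun i hi ↦ ?_⟩
  have hsymbol : shift^[t] (word (j + 2)) i = shift^[i + t] (word (j + 2)) 0 := by
    simp [shift_iterate_apply]
  have hcopy := hk (i + t) (by simpa using hi)
  rw [← Function.iterate_add_apply, hsymbol, add_assoc, add_comm (t : ℤ), ← Nat.cast_add]
  cases hs : shift^[i + t] (word (j + 2)) 0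
  · exact hcopy
  · simp [potential, reward, hs]

lemma integral_log_norm_opProd_orbitMeasure_nonneg (hp : IsShiftPair e potential p) (j n : ℕ) :
    0 ≤ ∫ x, Real.log ‖opProd p x n‖
      ∂(orbitMeasure shift (word (j + 2)) ((j + 2) * (j + 2 + 1))) := by
  have hpres : MeasurePreserving shift
      (orbitMeasure shift (word (j + 2)) ((j + 2) * (j + 2 + 1))) _ :=
    ⟨measurable_shift, map_orbitMeasure measurable_shift (isPeriodicPt_word _)⟩
  calc (0 : ℝ) = n * ∫ x, reward (j + 2) x ∂(orbitMeasure shift (word (j + 2)) _) := by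
        rw [integral_reward_orbitMeasure_word (Nat.succ_pos _), mul_zero]
    _ = ∫ x, birkhoffSum shift (reward (j + 2)) n x ∂(orbitMeasure shift (word (j + 2)) _) :=
        (integral_birkhoffSum hpres (integrable_orbitMeasure (by positivity) _) n).symm
    _ ≤ _ := integral_orbitMeasure_mono fun t ↦ by
        obtain ⟨k, hk⟩ := exists_windowSum_potential_eq j t n
        exact hk ▸ hp.windowSum_le_log_norm_opProd _ n k

instance : IsProbabilityMeasure orbitMixture :=
  isProbabilityMeasure_dyadicMixture fun _ ↦ isProbabilityMeasure_orbitMeasure (by positivity)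

lemma map_shift_orbitMixture : orbitMixture.map shift = orbitMixture :=
  map_dyadicMixture measurable_shift fun _ ↦
    map_orbitMeasure measurable_shift (isPeriodicPt_word _)

lemma ones_mem_support_orbitMixture : ones ∈ orbitMixture.support := by
  refine Measure.isClosed_support.mem_of_tendsto
    (tendsto_shift_iterate_word.comp (tendsto_add_atTop_nat 2)) (.of_forall fun j ↦ ?_)
  have ht : (j + 2) / 2 < (j + 2) * (j + 2 + 1) :=
    (Nat.div_le_self _ _).trans_lt (by nlinarith)
  exact ((dirac_iterate_absolutelyContinuous_orbitMeasure ht).trans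
    (absolutelyContinuous_dyadicMixture j)).support_mono (mem_support_dirac _)

variable [CompleteSpace E]

lemma logSprOp_nonpos (hp : IsShiftPair e potential p) : logSprOp p ≤ 0 := by
  have hJ (J : ℕ) : logSprOp p ≤ ((J + 2 : ℕ) : ℝ)⁻¹ :=
    logSprOp_le_of_window_bound (hp.abs_log_norm_opProd_le abs_potential_le) fun x n ↦
      hp.log_norm_opProd_le (windowSum_potential_le J x n)
  exact ge_of_tendsto' (tendsto_inv_atTop_nhds_zero_nat.comp (tendsto_add_atTop_nat 2)) hJ

lemma LamOp_orbitMixture_nonneg (hp : IsShiftPair e potential p) : 0 ≤ LamOp p orbitMixture := by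
  refine LamOp_nonneg fun n ↦ ?_
  have hint : Integrable (fun x ↦ Real.log ‖opProd p x n‖) orbitMixture :=
    integrable_log_norm_opProd (hp.abs_log_norm_opProd_le abs_potential_le) n
  exact integral_dyadicMixture_nonneg hint fun j ↦
    integral_log_norm_opProd_orbitMeasure_nonneg hp j n

lemma LamOp_halfSum_dirac_ones_neg (hp : IsShiftPair e potential p) (μ : Measure Sig)
    [IsProbabilityMeasure μ] : LamOp p (halfSum μ (Measure.dirac ones)) < 0 := by
  have hbound := hp.abs_log_norm_opProd_le abs_potential_le
  have hμ : ∫ x, Real.log ‖opProd p x 1‖ ∂μ ≤ 1 / 2 := by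
    simpa using integral_mono (integrable_log_norm_opProd hbound 1) (integrable_const (μ := μ) _)
      fun x ↦ hp.log_norm_opProd_le (n := 1) fun k ↦ by
        simpa [windowSum] using potential_le_half (x 0) k
  have hones : Real.log ‖opProd p ones 1‖ ≤ -1 :=
    hp.log_norm_opProd_le fun k ↦ by simp [windowSum, potential, ones]
  have : IsProbabilityMeasure (halfSum μ (Measure.dirac ones)) :=
    isProbabilityMeasure_halfSum
  calc LamOp p (halfSum μ (Measure.dirac ones))
      ≤ ∫ x, Real.log ‖opProd p x 1‖ ∂(halfSum μ (Measure.dirac ones)) :=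
        LamOp_le_integral_one hbound
    _ = (∫ x, Real.log ‖opProd p x 1‖ ∂μ + Real.log ‖opProd p ones 1‖) / 2 := by
        rw [integral_halfSum (integrable_log_norm_opProd hbound 1)
          (integrable_log_norm_opProd hbound 1), integral_dirac]
    _ < 0 := by linarith

end Construction

end Subordination

open Subordination

/-- (Failure of the subordination principle for weighted shifts.)  There exist a pair
`(L₀, L₁)` of bounded invertible weighted shift operators with positive coefficients on a
separable Hilbert space, and two shift-invariant Borel probability measures `μ, ν` on `Σ₂`
with the same support, such that `μ` is a maximising measure for `(L₀, L₁)` and `ν` is not. -/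
theorem subordination_failure (e : HilbertBasis ℤ ℝ H) :
    ∃ p ∈ WSet e, ∃ μ ν : Measure Sig,
      IsProbabilityMeasure μ ∧ μ.map shift = μ ∧
      IsProbabilityMeasure ν ∧ ν.map shift = ν ∧
      suppM μ = suppM ν ∧
      LamOp p μ = logSprOp p ∧ LamOp p ν ≠ logSprOp p := by
  obtain ⟨p, hpW, hp⟩ := exists_isShiftPair e abs_potential_le
  have hle : LamOp p orbitMixture ≤ logSprOp p :=
    LamOp_le_logSprOp (hp.abs_log_norm_opProd_le abs_potential_le)
  have hspr : logSprOp p ≤ 0 := logSprOp_nonpos hp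
  have hnonneg : 0 ≤ LamOp p orbitMixture := LamOp_orbitMixture_nonneg hp
  have hneg : LamOp p (halfSum orbitMixture (Measure.dirac ones)) < 0 :=
    LamOp_halfSum_dirac_ones_neg hp orbitMixture
  have hsupp : suppM orbitMixture = suppM (halfSum orbitMixture (Measure.dirac ones)) := by
    rw [suppM_eq_support, suppM_eq_support, support_halfSum_dirac ones_mem_support_orbitMixture]
  exact ⟨p, hpW, orbitMixture, _, inferInstance, map_shift_orbitMixture,
    isProbabilityMeasure_halfSum,
    map_halfSum measurable_shift map_shift_orbitMixture map_shift_dirac_ones, hsupp,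
    hle.antisymm (hspr.trans hnonneg), (hneg.trans_le (hnonneg.trans hle)).ne⟩
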